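/- arXiv:0708.1595 — 4 statements merged into one kernel-verified Lean document; each statement's English description precedes it below -/
import Mathlib

section
/- Let X₁ = u₁∧v₁ and X₂ = u₂∧v₂ be simple bivectors on ℝ⁴ such that each pair u_i, v_i is linearly independent. Then there exists a nonzero vector n ∈ ℝ⁴ with X̃₁ n = 0 and X̃₂ n = 0 (where X̃_i denotes the Hodge dual of X_i) if and only if the linear span of {u₁, v₁, u₂, v₂} in ℝ⁴ has dimension at most 3. -/
open Matrix BigOperators

noncomputable section

/-- The bivector (antisymmetric matrix) `u ∧ v = u vᵀ − v uᵀ` on `ℝ⁴`. -/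
def wedge (u v : Fin 4 → ℝ) : Matrix (Fin 4) (Fin 4) ℝ :=
  Matrix.of fun i j => u i * v j - v i * u j

/-- The Levi-Civita symbol `ε^{IJKL}` on `Fin 4`, with `ε^{0123} = 1`. -/
def lc (i j k l : Fin 4) : ℝ :=
  ((((j : ℤ) - i) * ((k : ℤ) - i) * ((l : ℤ) - i) * ((k : ℤ) - j) * ((l : ℤ) - j) *
      ((l : ℤ) - k) : ℤ) : ℝ) / 12

/-- The Hodge dual of a bivector: `X̃^{IJ} = (1/2) Σ_{K,L} ε^{IJKL} X^{KL}`. -/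
def hodge (X : Matrix (Fin 4) (Fin 4) ℝ) : Matrix (Fin 4) (Fin 4) ℝ :=
  Matrix.of fun i j => (1 / 2) * ∑ k, ∑ l, lc i j k l * X k l

/-! Contracting the Hodge dual of `u ∧ v` with `m` and `n` gives the determinant with rows
`m, n, u, v`. Hence `n` is annihilated exactly when no `m` completes `n, u, v` to a basis, that is,
when `n, u, v` are dependent; if `u ∧ v ≠ 0`, this says `n ∈ span {u, v}`. A common nonzero
annihilated vector is therefore a nonzero vector in the intersection of two planes, and the
dimension formula for sums of subspaces concludes. -/

theorem finrank_span_pair_eq_two {R M : Type*} [Semiring R] [StrongRankCondition R]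
    [AddCommMonoid M] [Module R M] {u v : M} (h : LinearIndependent R ![u, v]) :
    Module.finrank R ↥(Submodule.span R {u, v}) = 2 := by
  have := nontrivial_of_invariantBasisNumber R
  rw [← range_cons_cons_empty u v ![], finrank_span_eq_card h, Fintype.card_fin]

theorem inf_ne_bot_iff_finrank_sup_lt {K V : Type*} [DivisionRing K] [AddCommGroup V] [Module K V]
    (U W : Submodule K V) [FiniteDimensional K U] [FiniteDimensional K W] :
    U ⊓ W ≠ ⊥ ↔ Module.finrank K ↥(U ⊔ W) < Module.finrank K U + Module.finrank K W := by
  rw [← Submodule.finrank_sup_add_finrank_inf_eq, Nat.lt_add_right_iff_pos,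
    Nat.pos_iff_ne_zero, Ne, Ne, Submodule.finrank_eq_zero]

theorem linearIndependent_rows_iff_det_ne_zero {R ι : Type*} [CommRing R] [IsDomain R] [Fintype ι]
    [DecidableEq ι] (A : Matrix ι ι R) : LinearIndependent R A.row ↔ det A ≠ 0 := by
  refine ⟨fun hA hdet => ?_, linearIndependent_rows_of_det_ne_zero⟩
  obtain ⟨w, hw, hwA⟩ := exists_vecMul_eq_zero_iff.mpr hdet
  exact hw (vecMul_injective_iff.mpr hA (hwA.trans (zero_vecMul A).symm))

theorem forall_det_finCons_eq_zero_iff {R : Type*} [CommRing R] [IsDomain R] {d : ℕ}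
    (v : Fin d → Fin (d + 1) → R) :
    (∀ x, det (of (Fin.cons x v)) = 0) ↔ ¬ LinearIndependent R v := by
  constructor
  · intro hzero hv
    obtain ⟨x, hx⟩ := exists_linearIndependent_cons_of_lt_finrank hv (by simp)
    exact (linearIndependent_rows_iff_det_ne_zero (of (Fin.cons x v))).mp hx (hzero x)
  · intro hv x
    by_contra hdet
    exact hv ((linearIndependent_rows_of_det_ne_zero hdet).comp Fin.succ (Fin.succ_injective d))

theorem lc_swap_right (i j k l : Fin 4) : lc i j l k = -lc i j k l := by
  unfold lc
  push_cast
  ring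

theorem hodge_wedge_apply (u v : Fin 4 → ℝ) (i j : Fin 4) :
    hodge (wedge u v) i j = ∑ k, ∑ l, lc i j k l * (u k * v l) := by
  have hswap : ∑ k, ∑ l, lc i j k l * (v k * u l) = -∑ k, ∑ l, lc i j k l * (u k * v l) := by
    rw [Finset.sum_comm]
    simp only [← Finset.sum_neg_distrib]
    refine Finset.sum_congr rfl fun k _ => Finset.sum_congr rfl fun l _ => ?_
    rw [lc_swap_right, neg_mul, mul_comm (v l)]
  simp only [hodge, wedge, of_apply, mul_sub, Finset.sum_sub_distrib, hswap]
  ring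

theorem det_eq_sum_lc (a b c d : Fin 4 → ℝ) :
    det (of ![a, b, c, d]) = ∑ i, ∑ j, ∑ k, ∑ l, lc i j k l * (a i * b j * c k * d l) := by
  simp [det_succ_row_zero, Fin.sum_univ_succ, lc, Fin.succAbove]
  ring

theorem dotProduct_hodge_wedge_mulVec (m n u v : Fin 4 → ℝ) :
    m ⬝ᵥ hodge (wedge u v) *ᵥ n = det (of ![m, n, u, v]) := by
  simp only [det_eq_sum_lc, dotProduct, mulVec, hodge_wedge_apply, Finset.sum_mul, Finset.mul_sum]
  refine Finset.sum_congr rfl fun i _ => Finset.sum_congr rfl fun j _ =>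
    Finset.sum_congr rfl fun k _ => Finset.sum_congr rfl fun l _ => ?_
  ring

theorem hodge_wedge_mulVec_eq_zero_iff (u v n : Fin 4 → ℝ) :
    hodge (wedge u v) *ᵥ n = 0 ↔ ¬ LinearIndependent ℝ ![n, u, v] := by
  rw [← forall_det_finCons_eq_zero_iff, ← dotProduct_eq_zero_iff]
  refine forall_congr' fun m => ?_
  rw [dotProduct_comm, dotProduct_hodge_wedge_mulVec]
  rfl

theorem hodge_wedge_mulVec_eq_zero_iff_mem_span {u v : Fin 4 → ℝ}
    (h : LinearIndependent ℝ ![u, v]) (n : Fin 4 → ℝ) :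
    hodge (wedge u v) *ᵥ n = 0 ↔ n ∈ Submodule.span ℝ {u, v} := by
  rw [hodge_wedge_mulVec_eq_zero_iff, ← range_cons_cons_empty u v ![]]
  change ¬ LinearIndependent ℝ (Fin.cons n ![u, v] : Fin 3 → Fin 4 → ℝ) ↔ _
  rw [linearIndependent_finCons, and_iff_right h, not_not]

/-- For two simple bivectors `X₁ = u₁ ∧ v₁`, `X₂ = u₂ ∧ v₂` with each pair linearly
independent, there is a common nonzero vector annihilated by both Hodge duals iff
the span of the four vectors has dimension at most 3. -/
theorem dual_cross_simplicity_iff_span_dim_le_three (u₁ v₁ u₂ v₂ : Fin 4 → ℝ)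
    (h₁ : LinearIndependent ℝ ![u₁, v₁]) (h₂ : LinearIndependent ℝ ![u₂, v₂]) :
    (∃ n : Fin 4 → ℝ, n ≠ 0 ∧ (hodge (wedge u₁ v₁)).mulVec n = 0 ∧
        (hodge (wedge u₂ v₂)).mulVec n = 0) ↔
      Module.finrank ℝ ↥(Submodule.span ℝ ({u₁, v₁, u₂, v₂} : Set (Fin 4 → ℝ))) ≤ 3 := by
  simp only [hodge_wedge_mulVec_eq_zero_iff_mem_span h₁,
    hodge_wedge_mulVec_eq_zero_iff_mem_span h₂]
  set U := Submodule.span ℝ {u₁, v₁} with hU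
  set W := Submodule.span ℝ {u₂, v₂} with hW
  have hspan : Submodule.span ℝ {u₁, v₁, u₂, v₂} = U ⊔ W := by
    rw [hU, hW, ← Submodule.span_union, Set.insert_union, Set.singleton_union]
  calc (∃ n, n ≠ 0 ∧ n ∈ U ∧ n ∈ W)
      ↔ U ⊓ W ≠ ⊥ := by
        simp only [Submodule.ne_bot_iff, Submodule.mem_inf, and_comm]
    _ ↔ Module.finrank ℝ ↥(U ⊔ W) < Module.finrank ℝ U + Module.finrank ℝ W :=
        inf_ne_bot_iff_finrank_sup_lt U W
    _ ↔ Module.finrank ℝ ↥(Submodule.span ℝ {u₁, v₁, u₂, v₂}) ≤ 3 := by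
        rw [finrank_span_pair_eq_two h₁, finrank_span_pair_eq_two h₂, hspan, Nat.lt_succ_iff]
end
end

section
/- A real antisymmetric 4×4 matrix X is simple if and only if the quadratic simplicity constraint Σ_{I,J,K,L} ε_{IJKL} X^{IJ} X^{KL} = 0 holds (equivalently, Σ_{I,J} X^{IJ} X̃_{IJ} = 0, where X̃ is the Hodge dual of X). -/
open Matrix BigOperators

noncomputable section

/-!
The Pfaffian transforms by `Pf (B A Bᵀ) = det B * Pf A`. Selecting rows and columns, possibly with
repetitions, is such a congruence, so `Pf X = 0` forces all Plücker relations
`X i j * X a b = X i a * X j b - X i b * X j a`. Dividing by a nonzero entry `X a b` exhibits `X` as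
a multiple of the wedge of its columns `a` and `b`. The quadratic constraint is `8 * Pf X = 0`.
-/

section Pfaffian

variable {R : Type*} [CommRing R]

/-- The Pfaffian of an alternating `4 × 4` matrix, read off from the entries above the diagonal.
It is the obstruction to such a matrix being the wedge of two vectors. -/
def pfaffianFour (A : Matrix (Fin 4) (Fin 4) R) : R :=
  A 0 1 * A 2 3 - A 0 2 * A 1 3 + A 0 3 * A 1 2

theorem pfaffianFour_vecMulVec_sub_vecMulVec (u v : Fin 4 → R) :
    pfaffianFour (vecMulVec u v - vecMulVec v u) = 0 := by
  simp only [pfaffianFour, Matrix.sub_apply, vecMulVec_apply]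
  ring

variable {A : Matrix (Fin 4) (Fin 4) R}

theorem pfaffianFour_mul_mul_transpose (hA : Aᵀ = -A) (hdiag : ∀ i, A i i = 0)
    (B : Matrix (Fin 4) (Fin 4) R) :
    pfaffianFour (B * A * Bᵀ) = B.det * pfaffianFour A := by
  have hswap (i j : Fin 4) : A j i = -A i j := congrFun₂ hA i j
  simp only [pfaffianFour, mul_apply, transpose_apply, Fin.sum_univ_four, hdiag,
    hswap 0 1, hswap 0 2, hswap 0 3, hswap 1 2, hswap 1 3, hswap 2 3,
    det_succ_row_zero B, det_fin_three, submatrix_apply, Fin.succAbove, Fin.reduceSucc,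
    Fin.reduceCastSucc, Fin.reduceLT, Fin.isValue, reduceIte, Fin.coe_ofNat_eq_mod]
  ring

theorem pfaffianFour_submatrix (hA : Aᵀ = -A) (hdiag : ∀ i, A i i = 0) (w : Fin 4 → Fin 4) :
    pfaffianFour (A.submatrix w w) =
      ((1 : Matrix (Fin 4) (Fin 4) R).submatrix w id).det * pfaffianFour A := by
  rw [← pfaffianFour_mul_mul_transpose hA hdiag]
  congr 1
  ext i j
  simp [mul_apply, one_apply]

end Pfaffian

section Decomposable

variable {K : Type*} [Field K]

theorem exists_eq_vecMulVec_sub_iff_forall_pfaffianFour_submatrix {ι : Type*} {A : Matrix ι ι K} :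
    (∃ u v : ι → K, A = vecMulVec u v - vecMulVec v u) ↔
      ∀ w : Fin 4 → ι, pfaffianFour (A.submatrix w w) = 0 := by
  constructor
  · rintro ⟨u, v, rfl⟩ w
    exact pfaffianFour_vecMulVec_sub_vecMulVec (u ∘ w) (v ∘ w)
  · intro hpf
    have plucker (i j a b : ι) : A i j * A a b - A i a * A j b + A i b * A j a = 0 :=
      hpf ![i, j, a, b]
    by_cases hzero : ∀ a b, A a b = 0
    · exact ⟨0, 0, by ext i j; simp [hzero]⟩
    · push Not at hzero
      obtain ⟨a, b, hab⟩ := hzero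
      refine ⟨fun i => A i a / A a b, fun j => A j b, ?_⟩
      ext i j
      simp only [Matrix.sub_apply, vecMulVec_apply]
      field_simp
      linear_combination plucker i j a b

theorem exists_eq_vecMulVec_sub_iff_pfaffianFour_eq_zero {A : Matrix (Fin 4) (Fin 4) K}
    (hA : Aᵀ = -A) (hdiag : ∀ i, A i i = 0) :
    (∃ u v : Fin 4 → K, A = vecMulVec u v - vecMulVec v u) ↔ pfaffianFour A = 0 := by
  rw [exists_eq_vecMulVec_sub_iff_forall_pfaffianFour_submatrix]
  constructor
  · exact fun hpf => hpf id
  · intro hpf w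
    rw [pfaffianFour_submatrix hA hdiag, hpf, mul_zero]

end Decomposable

theorem wedge_eq_vecMulVec_sub (u v : Fin 4 → ℝ) :
    wedge u v = vecMulVec u v - vecMulVec v u :=
  rfl

theorem sum_lc_mul_mul_eq_pfaffianFour {X : Matrix (Fin 4) (Fin 4) ℝ} (hX : Xᵀ = -X) :
    ∑ i, ∑ j, ∑ k, ∑ l, lc i j k l * X i j * X k l = 8 * pfaffianFour X := by
  have hswap (i j : Fin 4) : X j i = -X i j := congrFun₂ hX i j
  simp only [lc, pfaffianFour, Fin.sum_univ_four, Fin.coe_ofNat_eq_mod, Nat.reduceMod,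
    hswap 0 1, hswap 0 2, hswap 0 3, hswap 1 2, hswap 1 3, hswap 2 3]
  push_cast
  ring

theorem sum_mul_hodge (X Y : Matrix (Fin 4) (Fin 4) ℝ) :
    ∑ i, ∑ j, X i j * hodge Y i j =
      1 / 2 * ∑ i, ∑ j, ∑ k, ∑ l, lc i j k l * X i j * Y k l := by
  simp only [hodge, of_apply, Finset.mul_sum]
  congr! 4
  ring

/-- A real antisymmetric 4×4 matrix `X` is simple iff the quadratic simplicity
constraint `Σ ε_{IJKL} X^{IJ} X^{KL} = 0` holds (equivalently `Σ X^{IJ} X̃_{IJ} = 0`). -/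
theorem simple_iff_quadratic_constraint (X : Matrix (Fin 4) (Fin 4) ℝ)
    (hX : Xᵀ = -X) :
    ((∃ u v : Fin 4 → ℝ, X = wedge u v) ↔
        ∑ i, ∑ j, ∑ k, ∑ l, lc i j k l * X i j * X k l = 0) ∧
    ((∃ u v : Fin 4 → ℝ, X = wedge u v) ↔
        ∑ i, ∑ j, X i j * hodge X i j = 0) := by
  have hdiag (i : Fin 4) : X i i = 0 := self_eq_neg.mp (congrFun₂ hX i i)
  have hsimple : (∃ u v : Fin 4 → ℝ, X = wedge u v) ↔ pfaffianFour X = 0 := by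
    simpa only [wedge_eq_vecMulVec_sub] using
      exists_eq_vecMulVec_sub_iff_pfaffianFour_eq_zero hX hdiag
  rw [hsimple, sum_mul_hodge, sum_lc_mul_mul_eq_pfaffianFour hX]
  norm_num
end
end

section
/- For every real antisymmetric 4×4 matrix X there exist an orthonormal basis (e⁰, e¹, e², e³) of ℝ⁴ with positive orientation (the matrix with columns e⁰, e¹, e², e³ has determinant 1) and real numbers α, β with α ≥ |β| such that X = α (e¹∧e²) + β (e⁰∧e³); that is, every bivector can be brought to the normal form α e¹∧e² + β e⁰∧e³ with α ≥ |β| with respect to some oriented orthonormal frame. -/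
open Matrix BigOperators

noncomputable section

/-!
Read the matrix as an alternating bilinear form `B`. By compactness `B` attains its maximum over
orthonormal pairs, say at `(u, v)`. If `w` is a unit vector orthogonal to `u` and `v`, rotating `v`
towards `w` cannot increase `B u v` to first order, so `B u w = 0`; likewise `B w v = 0`. In an
oriented orthonormal basis with `e 1 = u` and `e 2 = v`, only the coefficients of `e¹ ∧ e²` and
`e⁰ ∧ e³` survive, and the bound `|β| ≤ α` is the maximality of `(u, v)` against `(e 0, e 3)` and
`(e 3, e 0)`.
-/

open Module
open scoped RealInnerProductSpace

section Frames

variable {𝕜 E ι : Type*} [RCLike 𝕜] [NormedAddCommGroup E] [InnerProductSpace 𝕜 E]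

theorem orthonormal_pair_iff {u v : E} :
    Orthonormal 𝕜 ![u, v] ↔ ‖u‖ = 1 ∧ ‖v‖ = 1 ∧ inner 𝕜 u v = 0 := by
  simp [orthonormal_vecCons_iff, and_comm]

theorem orthonormal_pair_comm {u v : E} : Orthonormal 𝕜 ![u, v] ↔ Orthonormal 𝕜 ![v, u] := by
  rw [orthonormal_pair_iff, orthonormal_pair_iff, inner_eq_zero_symm, and_left_comm]

theorem isClosed_setOf_orthonormal : IsClosed {v : ι → E | Orthonormal 𝕜 v} := by
  classical
  simp only [orthonormal_iff_ite, Set.ofPred_forall]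
  refine isClosed_iInter fun i ↦ isClosed_iInter fun j ↦ isClosed_eq ?_ continuous_const
  fun_prop

theorem isCompact_setOf_orthonormal [FiniteDimensional 𝕜 E] :
    IsCompact {v : ι → E | Orthonormal 𝕜 v} := by
  have : ProperSpace E := FiniteDimensional.proper 𝕜 E
  refine (isCompact_univ_pi fun _ ↦ isCompact_closedBall (0 : E) 1).of_isClosed_subset
    isClosed_setOf_orthonormal fun v hv i _ ↦ ?_
  simp [hv.norm_eq_one i]

theorem exists_orthonormal_of_card_le_finrank [Fintype ι] [FiniteDimensional 𝕜 E]
    (h : Fintype.card ι ≤ finrank 𝕜 E) : ∃ v : ι → E, Orthonormal 𝕜 v := by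
  obtain ⟨f⟩ : Nonempty (ι ↪ Fin (finrank 𝕜 E)) :=
    Function.Embedding.nonempty_of_card_le (by simpa using h)
  exact ⟨_, (stdOrthonormalBasis 𝕜 E).orthonormal.comp f f.injective⟩

end Frames

section Oriented

variable {E ι κ : Type*} [NormedAddCommGroup E] [InnerProductSpace ℝ E] [Fintype ι] [DecidableEq ι]

theorem exists_orthonormalBasis_orientation_eq_of_ne (b : OrthonormalBasis ι ℝ E) (i : ι)
    (o : Orientation ℝ E ι) :
    ∃ b' : OrthonormalBasis ι ℝ E, b'.toBasis.orientation = o ∧ ∀ j ≠ i, b' j = b j := by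
  obtain h | h := b.toBasis.orientation_eq_or_eq_neg o
  · exact ⟨b, h.symm, fun _ _ ↦ rfl⟩
  · let c := b.toBasis.unitsSMul (Function.update 1 i (-1))
    have hc : ∀ j, c j = if j = i then -b j else b j := fun j ↦ by
      obtain rfl | hj := eq_or_ne j i <;> simp [c, Basis.unitsSMul_apply, *]
    have hortho : Orthonormal ℝ c :=
      b.orthonormal.orthonormal_of_forall_eq_or_eq_neg fun j ↦ by
        rw [hc]; split_ifs <;> simp
    refine ⟨c.toOrthonormalBasis hortho, ?_, fun j hj ↦ by simp [hc, hj]⟩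
    rw [Basis.toBasis_toOrthonormalBasis, Basis.orientation_neg_single, h]

theorem exists_orthonormalBasis_extension_orientation_eq
    (hcard : finrank ℝ E = Fintype.card ι) (o : Orientation ℝ E ι) {f : κ → ι}
    (hf : Function.Injective f) (hf' : ¬ Function.Surjective f) {v : κ → E}
    (hv : Orthonormal ℝ v) :
    ∃ b : OrthonormalBasis ι ℝ E, b.toBasis.orientation = o ∧ ∀ k, b (f k) = v k := by
  obtain ⟨i, hi⟩ : ∃ i, ∀ k, f k ≠ i := by simpa [Function.Surjective] using hf'
  have : FiniteDimensional ℝ E := .of_finrank_pos (hcard ▸ Fintype.card_pos_iff.2 ⟨i⟩)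
  have hrestrict : Orthonormal ℝ ((Set.range f).domRestrict (Function.extend f v 0)) := by
    convert hv.comp (Equiv.ofInjective f hf).symm (Equiv.injective _)
    ext ⟨_, k, rfl⟩
    simp [hf.extend_apply]
  obtain ⟨b, hb⟩ := hrestrict.exists_orthonormalBasis_extension_of_card_eq hcard
  obtain ⟨b', ho, hb'⟩ := exists_orthonormalBasis_orientation_eq_of_ne b i o
  exact ⟨b', ho, fun k ↦ by rw [hb' _ (hi k), hb _ ⟨k, rfl⟩, hf.extend_apply]⟩

end Oriented

section AlternatingForms

theorem eq_of_isAlt_of_forall_lt {R M ι : Type*} [CommRing R] [AddCommGroup M] [Module R M]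
    [LinearOrder ι] {B C : LinearMap.BilinForm R M} (hB : B.IsAlt) (hC : C.IsAlt)
    (b : Basis ι R M) (h : ∀ i j, i < j → B (b i) (b j) = C (b i) (b j)) : B = C := by
  refine LinearMap.BilinForm.ext_basis b fun i j ↦ ?_
  obtain hij | rfl | hij := lt_trichotomy i j
  · exact h i j hij
  · rw [hB.self_eq_zero, hC.self_eq_zero]
  · rw [← hB.neg_eq, ← hC.neg_eq, h j i hij]

theorem isAlt_toBilin {R M n : Type*} [CommRing R] [NoZeroDivisors R] [CharZero R]
    [AddCommGroup M] [Module R M] [Fintype n] [DecidableEq n] (b : Basis n R M)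
    {A : Matrix n n R} (hA : Aᵀ = -A) : (Matrix.toBilin b A).IsAlt := by
  refine LinearMap.isAlt_iff_eq_neg_flip.2 (LinearMap.BilinForm.ext_basis b fun i j ↦ ?_)
  have hij : A j i = -A i j := congrFun₂ hA i j
  simp [Matrix.toBilin_apply, Finsupp.single_apply, hij]

variable {E : Type*} [NormedAddCommGroup E] [InnerProductSpace ℝ E]

/-- The bivector `u ∧ v` of an inner product space as a bilinear form, each vector being identified
with the functional it represents; this is the coordinate-free counterpart of `wedge`. -/
def wedgeForm (u v : E) : LinearMap.BilinForm ℝ E :=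
  .linMulLin (innerₗ E u) (innerₗ E v) - .linMulLin (innerₗ E v) (innerₗ E u)

theorem wedgeForm_apply (u v x y : E) :
    wedgeForm u v x y = ⟪u, x⟫ * ⟪v, y⟫ - ⟪v, x⟫ * ⟪u, y⟫ := rfl

theorem isAlt_wedgeForm (u v : E) : (wedgeForm u v).IsAlt := fun x ↦ by
  rw [wedgeForm_apply]; ring

theorem toBilin_wedge (u v : EuclideanSpace ℝ (Fin 4)) :
    Matrix.toBilin (EuclideanSpace.basisFun (Fin 4) ℝ).toBasis (wedge u v) = wedgeForm u v :=
  LinearMap.BilinForm.ext_basis (EuclideanSpace.basisFun (Fin 4) ℝ).toBasis fun i j ↦ by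
    simp [Matrix.toBilin_apply, wedgeForm_apply, wedge, EuclideanSpace.inner_single_right]

theorem eq_smul_wedgeForm_add_smul_wedgeForm {B : LinearMap.BilinForm ℝ E} (hB : B.IsAlt)
    (e : OrthonormalBasis (Fin 4) ℝ E) (h₀₁ : B (e 0) (e 1) = 0) (h₀₂ : B (e 0) (e 2) = 0)
    (h₁₃ : B (e 1) (e 3) = 0) (h₂₃ : B (e 2) (e 3) = 0) :
    B = B (e 1) (e 2) • wedgeForm (e 1) (e 2) + B (e 0) (e 3) • wedgeForm (e 0) (e 3) := by
  refine eq_of_isAlt_of_forall_lt hB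
    (((isAlt_wedgeForm _ _).smul _).add ((isAlt_wedgeForm _ _).smul _)) e.toBasis fun i j hij ↦ ?_
  fin_cases i <;> fin_cases j <;> simp_all [wedgeForm_apply, e.inner_eq_ite]

/-- The orthonormal pair `(u, v)` maximizes `B` among all orthonormal pairs. Such a pair is the
extremal configuration whose first-order conditions produce the normal form of `B`. -/
structure IsMaxOrthonormalPair (B : LinearMap.BilinForm ℝ E) (u v : E) : Prop where
  orthonormal : Orthonormal ℝ ![u, v]
  apply_le : ∀ {x y : E}, Orthonormal ℝ ![x, y] → B x y ≤ B u v

theorem exists_isMaxOrthonormalPair [FiniteDimensional ℝ E] (hE : 2 ≤ finrank ℝ E)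
    (B : LinearMap.BilinForm ℝ E) : ∃ u v, IsMaxOrthonormalPair B u v := by
  have hcont : Continuous fun w : Fin 2 → E ↦ B.toContinuousBilinearMap (w 0) (w 1) := by fun_prop
  obtain ⟨w, hw, hmax⟩ := (isCompact_setOf_orthonormal (𝕜 := ℝ)).exists_isMaxOn
    (exists_orthonormal_of_card_le_finrank (by simpa using hE)) hcont.continuousOn
  refine ⟨w 0, w 1, ?_, fun {x y} hxy ↦ hmax hxy⟩
  have hpair : ![w 0, w 1] = w := by ext i; fin_cases i <;> rfl
  exact hpair ▸ hw

namespace IsMaxOrthonormalPair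

variable {B : LinearMap.BilinForm ℝ E} {u v w : E}

theorem flip (h : IsMaxOrthonormalPair B u v) : IsMaxOrthonormalPair B.flip v u where
  orthonormal := orthonormal_pair_comm.1 h.orthonormal
  apply_le hxy := h.apply_le (orthonormal_pair_comm.1 hxy)

theorem apply_left_eq_zero (h : IsMaxOrthonormalPair B u v) (hw : ‖w‖ = 1) (huw : ⟪u, w⟫ = 0)
    (hvw : ⟪v, w⟫ = 0) : B u w = 0 := by
  obtain ⟨hu, hv, huv⟩ := orthonormal_pair_iff.1 h.orthonormal
  let f : ℝ → ℝ := fun θ ↦ B u (Real.cos θ • v + Real.sin θ • w)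
  have hmax : IsLocalMax f 0 := .of_forall fun θ ↦ by
    have hnorm : ‖Real.cos θ • v + Real.sin θ • w‖ = 1 := by
      rw [← sq_eq_sq₀ (norm_nonneg _) zero_le_one, sq, norm_add_sq_eq_norm_sq_add_norm_sq_real]
      · simp [norm_smul, hv, hw, ← sq]
      · simp [inner_smul_left, inner_smul_right, hvw]
    simpa [f] using h.apply_le (orthonormal_pair_iff.2
      ⟨hu, hnorm, by simp [inner_add_right, inner_smul_right, huv, huw]⟩)
  have hderiv : HasDerivAt f (B u w) 0 := by
    simpa [f] using ((Real.hasDerivAt_cos 0).mul_const (B u v)).fun_add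
      ((Real.hasDerivAt_sin 0).mul_const (B u w))
  exact hmax.hasDerivAt_eq_zero hderiv

theorem apply_right_eq_zero (h : IsMaxOrthonormalPair B u v) (hw : ‖w‖ = 1) (huw : ⟪u, w⟫ = 0)
    (hvw : ⟪v, w⟫ = 0) : B w v = 0 :=
  h.flip.apply_left_eq_zero hw hvw huw

theorem abs_apply_le (h : IsMaxOrthonormalPair B u v) (hB : B.IsAlt) {x y : E}
    (hxy : Orthonormal ℝ ![x, y]) : |B x y| ≤ B u v := by
  rw [abs_le']
  exact ⟨h.apply_le hxy, hB.neg_eq x y ▸ h.apply_le (orthonormal_pair_comm.1 hxy)⟩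

end IsMaxOrthonormalPair

end AlternatingForms

theorem bivector_normal_form_general {E : Type*} [NormedAddCommGroup E] [InnerProductSpace ℝ E]
    (hE : finrank ℝ E = 4) (o : Orientation ℝ E (Fin 4)) {B : LinearMap.BilinForm ℝ E}
    (hB : B.IsAlt) :
    ∃ (e : OrthonormalBasis (Fin 4) ℝ E) (α β : ℝ), e.toBasis.orientation = o ∧ |β| ≤ α ∧
      B = α • wedgeForm (e 1) (e 2) + β • wedgeForm (e 0) (e 3) := by
  have : FiniteDimensional ℝ E := .of_finrank_pos (by lia)
  obtain ⟨u, v, hmax⟩ := exists_isMaxOrthonormalPair (by lia) B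
  obtain ⟨e, ho, he⟩ := exists_orthonormalBasis_extension_orientation_eq (by simpa using hE) o
    (f := ![1, 2]) (by decide) (by decide) hmax.orthonormal
  obtain rfl : e 1 = u := he 0
  obtain rfl : e 2 = v := he 1
  have hleft (i) (h₁ : 1 ≠ i) (h₂ : 2 ≠ i) : B (e 1) (e i) = 0 :=
    hmax.apply_left_eq_zero (e.norm_eq_one i) (e.inner_eq_zero h₁) (e.inner_eq_zero h₂)
  have hright (i) (h₁ : 1 ≠ i) (h₂ : 2 ≠ i) : B (e i) (e 2) = 0 :=
    hmax.apply_right_eq_zero (e.norm_eq_one i) (e.inner_eq_zero h₁) (e.inner_eq_zero h₂)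
  have h₀₃ : Orthonormal ℝ ![e 0, e 3] :=
    orthonormal_pair_iff.2 ⟨e.norm_eq_one 0, e.norm_eq_one 3, e.inner_eq_zero (by decide)⟩
  exact ⟨e, B (e 1) (e 2), B (e 0) (e 3), ho, hmax.abs_apply_le hB h₀₃,
    eq_smul_wedgeForm_add_smul_wedgeForm hB e
      (hB.isRefl.eq_zero (hleft 0 (by decide) (by decide))) (hright 0 (by decide) (by decide))
      (hleft 3 (by decide) (by decide)) (hB.isRefl.eq_zero (hright 3 (by decide) (by decide)))⟩

/-- Every real antisymmetric 4×4 matrix can be brought to the normal form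
`α e¹∧e² + β e⁰∧e³` with `α ≥ |β|` with respect to some positively oriented
orthonormal frame of `ℝ⁴`. -/
theorem bivector_normal_form (X : Matrix (Fin 4) (Fin 4) ℝ) (hX : Xᵀ = -X) :
    ∃ (e : Fin 4 → Fin 4 → ℝ) (α β : ℝ),
      (∀ i j : Fin 4, ∑ k, e i k * e j k = if i = j then 1 else 0) ∧
      (Matrix.of fun i j => e j i).det = 1 ∧
      α ≥ |β| ∧
      X = α • wedge (e 1) (e 2) + β • wedge (e 0) (e 3) := by
  let std := EuclideanSpace.basisFun (Fin 4) ℝ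
  obtain ⟨e, α, β, ho, hβα, hform⟩ := bivector_normal_form_general finrank_euclideanSpace_fin
    std.toBasis.orientation (isAlt_toBilin std.toBasis hX)
  refine ⟨fun i ↦ e i, α, β, fun i j ↦ ?_, ?_, hβα, ?_⟩
  · simpa [PiLp.inner_apply, mul_comm] using e.inner_eq_ite i j
  · exact std.det_to_matrix_orthonormalBasis_of_same_orientation e ho.symm
  · refine (Matrix.toBilin std.toBasis).injective ?_
    simpa only [map_add, map_smul, std, toBilin_wedge] using hform
end
end

section
/- Let X₁ = (t₁, y₁) and X₂ = (t₂, y₂) be two distinct points of the upper half-space model ℝ₊ × ℂ of hyperbolic 3-space, and let r > 0 be their hyperbolic distance, determined by cosh r = (1/2)·( t₁/t₂ + t₂/t₁ + t₁ t₂ |y₁ − y₂|² ). Then for every real ρ ≠ 0 the convolution of bulk-to-boundary propagators over the boundary complex plane satisfies 2 ∫_ℂ ( t₁|y₁ − z|² + t₁⁻¹ )^{−(1+iρ)} · ( t₂|y₂ − z|² + t₂⁻¹ )^{−(1−iρ)} d²z/π = 2 sin(ρ r) / (ρ sinh r), where d²z denotes Lebesgue measure on ℂ ≅ ℝ². -/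
open MeasureTheory Complex

/-!
Put `Aᵢ z = tᵢ‖yᵢ - z‖² + tᵢ⁻¹`, so that the integrand is `(A₁A₂)⁻¹ exp (iρ log (A₂/A₁))`. An
inversion of the boundary with center `p`, extended to hyperbolic space, multiplies `A₁` and `A₂` by
the same factor, whose square is cancelled by the Jacobian; hence the integral is invariant.
Choosing for `p` an end of the geodesic through the two points moves them to a common vertical line.
There, in polar coordinates, the derivative of `log (A₂/A₁)` is `± 4 (sinh r) x / (A₁A₂)`, and
`log (A₂/A₁)` runs through `(-r, r)`: as in Archimedes' hat-box theorem, `d²z / (A₁A₂)` is pushed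
forward to a multiple of Lebesgue measure on `(-r, r)`, and the integral becomes the Fourier
transform of an interval.
-/

section Inversion

open EuclideanGeometry Module Set

variable {V E : Type*} [NormedAddCommGroup V] [InnerProductSpace ℝ V] [NormedAddCommGroup E]
  [NormedSpace ℝ E]

theorem image_inversion_compl_center (c : V) {R : ℝ} (hR : R ≠ 0) :
    inversion c R '' {c}ᶜ = {c}ᶜ := by
  rw [image_compl_eq (inversion_bijective c hR), image_singleton, inversion_self]

variable [FiniteDimensional ℝ V]

theorem abs_det_smul_reflection (a : ℝ) (K : Submodule ℝ V) :
    |(a • (K.reflection : V →L[ℝ] V)).det| = |a| ^ finrank ℝ V := by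
  change |LinearMap.det (a • K.reflection.toLinearMap)| = _
  rw [LinearMap.det_smul, K.det_reflection, abs_mul, abs_pow, abs_neg_one_pow, mul_one]

variable [Nontrivial V] [MeasurableSpace V] [BorelSpace V]

theorem integral_comp_inversion (μ : Measure V) [μ.IsAddHaarMeasure] (c : V) {R : ℝ} (hR : R ≠ 0)
    (f : V → E) :
    ∫ z, (R / dist z c) ^ (2 * finrank ℝ V) • f (inversion c R z) ∂μ = ∫ z, f z ∂μ := by
  have h := integral_image_eq_integral_abs_det_fderiv_smul μ (measurableSet_singleton c).compl
    (fun z hz ↦ (hasFDerivAt_inversion (R := R) hz).hasFDerivWithinAt)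
    (inversion_injective c hR).injOn f
  simp only [image_inversion_compl_center c hR, abs_det_smul_reflection, restrict_compl_singleton,
    abs_sq, ← pow_mul] at h
  exact h.symm

end Inversion

/-- The upper half-space model of hyperbolic space with boundary `V ∪ {∞}`. The coordinate
`invHeight`, the reciprocal of the Euclidean height, is the `t` of the metric
`dt² / t² + t² ‖dy‖²`. -/
structure UpperHalfSpace (V : Type*) where
  invHeight : ℝ
  base : V
  invHeight_pos : 0 < invHeight

namespace UpperHalfSpace

open EuclideanGeometry Module Set Filter Topology

variable {V E : Type*} [NormedAddCommGroup V] [NormedAddCommGroup E] [NormedSpace ℝ E]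

/-- The reciprocal of the Poisson kernel with pole at the boundary point `z`; the bulk-to-boundary
propagator `K_ρ(X, z)` is its power with exponent `-(1 + iρ)`. -/
noncomputable def invPoisson (X : UpperHalfSpace V) (z : V) : ℝ :=
  X.invHeight * ‖X.base - z‖ ^ 2 + X.invHeight⁻¹

/-- The hyperbolic cosine of the hyperbolic distance. -/
noncomputable def coshDist (X Y : UpperHalfSpace V) : ℝ :=
  (1 / 2) * (X.invHeight / Y.invHeight + Y.invHeight / X.invHeight +
    X.invHeight * Y.invHeight * ‖X.base - Y.base‖ ^ 2)

theorem invPoisson_pos (X : UpperHalfSpace V) (z : V) : 0 < X.invPoisson z := by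
  have := X.invHeight_pos
  unfold invPoisson
  positivity

theorem coshDist_comm (X Y : UpperHalfSpace V) : X.coshDist Y = Y.coshDist X := by
  rw [coshDist, coshDist, norm_sub_rev]
  ring

theorem coshDist_of_base_eq {X Y : UpperHalfSpace V} (h : X.base = Y.base) :
    X.coshDist Y = Real.cosh (Real.log (Y.invHeight / X.invHeight)) := by
  rw [Real.cosh_log (div_pos Y.invHeight_pos X.invHeight_pos), coshDist, h, sub_self,
    norm_zero, inv_div]
  ring

section BusemannIntegral

variable [MeasureSpace V]

/-- The integral over the boundary of a function of the Busemann cocycle `log (A₂ / A₁)` against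
the geometric mean `(A₁ A₂)⁻¹` of the harmonic densities of two points, for a boundary of
dimension two. -/
noncomputable def busemannIntegral (X Y : UpperHalfSpace V) (φ : ℝ → E) : E :=
  ∫ z, (X.invPoisson z * Y.invPoisson z)⁻¹ • φ (Real.log (Y.invPoisson z / X.invPoisson z))

theorem busemannIntegral_comm (X Y : UpperHalfSpace V) (φ : ℝ → E) :
    X.busemannIntegral Y φ = Y.busemannIntegral X fun u ↦ φ (-u) := by
  simp only [busemannIntegral, ← Real.log_inv, inv_div, mul_comm]

end BusemannIntegral

variable [InnerProductSpace ℝ V]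

section Invert

/-- The isometry of hyperbolic space extending the inversion of `V` in the unit sphere around
`p`. -/
noncomputable def invert (p : V) (X : UpperHalfSpace V) : UpperHalfSpace V where
  invHeight := X.invPoisson p
  base := p + (X.invHeight / X.invPoisson p) • (X.base - p)
  invHeight_pos := X.invPoisson_pos p

theorem invHeight_smul_base_invert_sub (p : V) (X : UpperHalfSpace V) :
    (X.invert p).invHeight • ((X.invert p).base - p) = X.invHeight • (X.base - p) := by
  simp only [invert]
  rw [add_sub_cancel_left, smul_smul, mul_div_cancel₀ _ (X.invPoisson_pos p).ne']

theorem invHeight_mul_invPoisson (p : V) (X : UpperHalfSpace V) :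
    X.invHeight * X.invPoisson p = ‖X.invHeight • (X.base - p)‖ ^ 2 + 1 := by
  rw [invPoisson, norm_smul, mul_pow, Real.norm_eq_abs, sq_abs, mul_add,
    mul_inv_cancel₀ X.invHeight_pos.ne']
  ring

theorem invPoisson_invert_center (p : V) (X : UpperHalfSpace V) :
    (X.invert p).invPoisson p = X.invHeight := by
  have h := (X.invert p).invHeight_mul_invPoisson p
  rw [invHeight_smul_base_invert_sub, ← invHeight_mul_invPoisson, mul_comm X.invHeight] at h
  exact mul_left_cancel₀ (X.invPoisson_pos p).ne' h

theorem invPoisson_eq_sub_inner (p : V) (X : UpperHalfSpace V) (z : V) :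
    X.invPoisson z = X.invHeight * ‖z - p‖ ^ 2 - 2 * inner ℝ (X.invHeight • (X.base - p)) (z - p) +
      X.invPoisson p := by
  rw [invPoisson, ← sub_sub_sub_cancel_right X.base z p, norm_sub_sq_real, inner_smul_left,
    invPoisson, conj_trivial]
  ring

theorem coshDist_eq_sub_inner (p : V) (X Y : UpperHalfSpace V) :
    X.coshDist Y = (X.invHeight * Y.invPoisson p + Y.invHeight * X.invPoisson p) / 2 -
      inner ℝ (X.invHeight • (X.base - p)) (Y.invHeight • (Y.base - p)) := by
  rw [coshDist, ← sub_sub_sub_cancel_right X.base Y.base p, norm_sub_sq_real, inner_smul_left,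
    inner_smul_right, invPoisson, invPoisson, conj_trivial]
  ring

/-- The three quantities `invHeight`, `invPoisson p` and `invHeight • (base - p)` are the
coordinates of a point in the hyperboloid model, and the inversion just exchanges the first two. -/
theorem coshDist_invert (p : V) (X Y : UpperHalfSpace V) :
    (X.invert p).coshDist (Y.invert p) = X.coshDist Y := by
  rw [coshDist_eq_sub_inner p, coshDist_eq_sub_inner p X Y]
  simp only [invHeight_smul_base_invert_sub, invPoisson_invert_center]
  simp only [invert]
  ring

theorem invPoisson_inversion {p z : V} (hz : z ≠ p) (X : UpperHalfSpace V) :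
    X.invPoisson (inversion p 1 z) = (1 / dist z p) ^ 2 * (X.invert p).invPoisson z := by
  have hd : ‖z - p‖ ≠ 0 := norm_ne_zero_iff.mpr (sub_ne_zero.mpr hz)
  have hsub : inversion p 1 z - p = (1 / ‖z - p‖) ^ 2 • (z - p) := by
    simp [inversion, dist_eq_norm]
  rw [invPoisson_eq_sub_inner p, invPoisson_eq_sub_inner p (X.invert p),
    invHeight_smul_base_invert_sub, invPoisson_invert_center, hsub, norm_smul, inner_smul_right,
    dist_eq_norm]
  simp only [invert, norm_pow, norm_div, norm_one, norm_norm]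
  field_simp
  ring

/-- The center is an end of the geodesic through the two points, hence lies on the line through
their bases. -/
theorem exists_base_invert_eq {X Y : UpperHalfSpace V} (h : X.base ≠ Y.base) :
    ∃ p : V, (X.invert p).base = (Y.invert p).base := by
  obtain ⟨s, x, hs⟩ := X
  obtain ⟨t, y, ht⟩ := Y
  have hd : 0 < ‖y - x‖ ^ 2 := pow_pos (norm_pos_iff.mpr (sub_ne_zero.mpr (Ne.symm h))) 2
  set d := ‖y - x‖ ^ 2 with hd_def
  obtain ⟨k, hk⟩ : ∃ k : ℝ, d * (k * k) + ((s ^ 2)⁻¹ - (t ^ 2)⁻¹ - d) * k + -(s ^ 2)⁻¹ = 0 := by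
    refine exists_quadratic_eq_zero hd.ne' ⟨_, (Real.mul_self_sqrt ?_).symm⟩
    have : 0 < d * (s ^ 2)⁻¹ := by positivity
    rw [discrim]
    nlinarith only [this, sq_nonneg ((s ^ 2)⁻¹ - (t ^ 2)⁻¹ - d)]
  have hx : x - (x + k • (y - x)) = -k • (y - x) := by module
  have hy : y - (x + k • (y - x)) = (1 - k) • (y - x) := by module
  refine ⟨x + k • (y - x), ?_⟩
  simp only [invert, invPoisson, hx, hy, norm_smul, mul_pow, Real.norm_eq_abs, sq_abs, smul_smul,
    ← hd_def]
  congr 2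
  have hs' : 0 < s * ((-k) ^ 2 * d) + s⁻¹ := by positivity
  have ht' : 0 < t * ((1 - k) ^ 2 * d) + t⁻¹ := by positivity
  rw [div_mul_eq_mul_div, div_mul_eq_mul_div, div_eq_div_iff hs'.ne' ht'.ne']
  field_simp at hk ⊢
  linear_combination hk

end Invert

section Invariance

variable [FiniteDimensional ℝ V] [Nontrivial V] [MeasurableSpace V] [BorelSpace V]

theorem integral_invPoisson_invert (μ : Measure V) [μ.IsAddHaarMeasure] (p : V)
    (X Y : UpperHalfSpace V) {F : ℝ → ℝ → E}
    (hF : ∀ c > 0, ∀ a b, F (c * a) (c * b) = (c ^ finrank ℝ V)⁻¹ • F a b) :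
    ∫ z, F ((X.invert p).invPoisson z) ((Y.invert p).invPoisson z) ∂μ =
      ∫ z, F (X.invPoisson z) (Y.invPoisson z) ∂μ := by
  rw [← integral_comp_inversion μ p one_ne_zero fun z ↦ F (X.invPoisson z) (Y.invPoisson z)]
  refine integral_congr_ae ?_
  filter_upwards [compl_mem_ae_iff.mpr (measure_singleton p)] with z hz
  have hd : 0 < 1 / dist z p := one_div_pos.mpr (dist_pos.mpr hz)
  rw [invPoisson_inversion hz, invPoisson_inversion hz, hF _ (pow_pos hd 2), ← pow_mul, smul_smul,
    mul_inv_cancel₀ (pow_pos hd _).ne', one_smul]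

end Invariance

section VerticalLine

/-- The function `log (A₂ / A₁)` at distance `x` from the common base of two points on a vertical
line whose inverse heights are `s` and `t`. -/
noncomputable def radialLog (s t x : ℝ) : ℝ :=
  Real.log ((t * x ^ 2 + t⁻¹) / (s * x ^ 2 + s⁻¹))

variable {s t : ℝ}

theorem hasDerivAt_radialLog (hs : 0 < s) (ht : 0 < t) (x : ℝ) :
    HasDerivAt (radialLog s t) (4 * Real.sinh (Real.log (t / s)) *
      (x * ((s * x ^ 2 + s⁻¹) * (t * x ^ 2 + t⁻¹))⁻¹)) x := by
  have hA : 0 < s * x ^ 2 + s⁻¹ := by positivity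
  have hB : 0 < t * x ^ 2 + t⁻¹ := by positivity
  have hderiv (c : ℝ) : HasDerivAt (fun x : ℝ ↦ c * x ^ 2 + c⁻¹) (c * (2 * x)) x := by
    simpa using ((hasDerivAt_pow 2 x).const_mul c).add_const c⁻¹
  refine (((hderiv t).fun_div (hderiv s) hA.ne').log (div_pos hB hA).ne').congr_deriv ?_
  rw [Real.sinh_log (div_pos ht hs)]
  field_simp
  ring

theorem strictMonoOn_radialLog (hs : 0 < s) (hst : s < t) :
    StrictMonoOn (radialLog s t) (Ici 0) := by
  have ht := hs.trans hst
  refine strictMonoOn_of_deriv_pos (convex_Ici 0)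
    (fun x _ ↦ (hasDerivAt_radialLog hs ht x).continuousAt.continuousWithinAt) fun x hx ↦ ?_
  rw [interior_Ici, mem_Ioi] at hx
  have hsinh : 0 < Real.sinh (Real.log (t / s)) :=
    Real.sinh_pos_iff.mpr (Real.log_pos ((one_lt_div hs).mpr hst))
  rw [(hasDerivAt_radialLog hs ht x).deriv]
  positivity

theorem radialLog_zero (s t : ℝ) : radialLog s t 0 = -Real.log (t / s) := by
  simp [radialLog, ← Real.log_inv, div_eq_mul_inv, mul_comm]

theorem tendsto_radialLog_atTop (hs : 0 < s) (ht : 0 < t) :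
    Tendsto (radialLog s t) atTop (𝓝 (Real.log (t / s))) := by
  have hinv : Tendsto (fun x : ℝ ↦ (x ^ 2)⁻¹) atTop (𝓝 0) :=
    (tendsto_pow_atTop two_ne_zero).inv_tendsto_atTop
  have hlim (c : ℝ) : Tendsto (fun x : ℝ ↦ c + c⁻¹ * (x ^ 2)⁻¹) atTop (𝓝 c) := by
    simpa using (hinv.const_mul c⁻¹).const_add c
  refine (((hlim t).div (hlim s) hs.ne').log (div_pos ht hs).ne').congr' ?_
  filter_upwards [eventually_gt_atTop 0] with x hx
  simp only [radialLog, Pi.div_apply]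
  congr 1
  field_simp

theorem radialLog_lt (hs : 0 < s) (hst : s < t) (x : ℝ) :
    radialLog s t x < Real.log (t / s) := by
  have ht := hs.trans hst
  refine Real.log_lt_log (by positivity) ((div_lt_div_iff₀ (by positivity) hs).mpr ?_)
  have hinv : t⁻¹ * s < t * s⁻¹ := by
    rw [inv_mul_lt_iff₀ ht, ← mul_assoc, lt_mul_inv_iff₀ hs]
    exact mul_self_lt_mul_self hs.le hst
  linarith

theorem image_radialLog_Ioi (hs : 0 < s) (hst : s < t) :
    radialLog s t '' Ioi 0 = Ioo (-Real.log (t / s)) (Real.log (t / s)) := by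
  have ht := hs.trans hst
  have hcont : Continuous (radialLog s t) :=
    continuous_iff_continuousAt.mpr fun x ↦ (hasDerivAt_radialLog hs ht x).continuousAt
  refine Subset.antisymm ?_ ?_
  · rintro _ ⟨x, hx, rfl⟩
    rw [← radialLog_zero]
    exact ⟨strictMonoOn_radialLog hs hst self_mem_Ici (Ioi_subset_Ici_self hx) hx,
      radialLog_lt hs hst x⟩
  · rw [← radialLog_zero]
    exact isPreconnected_Ioi.intermediate_value_Ioo (l₁ := 𝓝[>] 0) inf_le_right
      (le_principal_iff.mpr (Ioi_mem_atTop 0)) hcont.continuousOn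
      ((hcont.tendsto 0).mono_left nhdsWithin_le_nhds) (tendsto_radialLog_atTop hs ht)

theorem integral_radialLog (hs : 0 < s) (hst : s < t) (φ : ℝ → E) :
    ∫ x in Ioi 0, x • ((s * x ^ 2 + s⁻¹) * (t * x ^ 2 + t⁻¹))⁻¹ • φ (radialLog s t x) =
      (4 * Real.sinh (Real.log (t / s)))⁻¹ •
        ∫ u in -Real.log (t / s)..Real.log (t / s), φ u := by
  have hlog : 0 < Real.log (t / s) := Real.log_pos ((one_lt_div hs).mpr hst)
  have hsinh : 0 < Real.sinh (Real.log (t / s)) := Real.sinh_pos_iff.mpr hlog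
  rw [intervalIntegral.integral_of_le (by linarith), integral_Ioc_eq_integral_Ioo,
    ← image_radialLog_Ioi hs hst,
    integral_image_eq_integral_deriv_smul_of_monotoneOn measurableSet_Ioi
      (fun x _ ↦ (hasDerivAt_radialLog hs (hs.trans hst) x).hasDerivWithinAt)
      ((strictMonoOn_radialLog hs hst).monotoneOn.mono Ioi_subset_Ici_self)]
  simp only [mul_smul _ (_ * _), integral_smul]
  rw [inv_smul_smul₀ (mul_pos four_pos hsinh).ne']
  simp only [mul_smul]

end VerticalLine

section HatBox

variable [FiniteDimensional ℝ V] [MeasurableSpace V] [BorelSpace V]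

theorem busemannIntegral_invert (hV : finrank ℝ V = 2) (p : V) (X Y : UpperHalfSpace V)
    (φ : ℝ → E) :
    (X.invert p).busemannIntegral (Y.invert p) φ = X.busemannIntegral Y φ := by
  have : Nontrivial V := nontrivial_of_finrank_pos (R := ℝ) (by lia)
  refine integral_invPoisson_invert volume p X Y
    (F := fun a b ↦ (a * b)⁻¹ • φ (Real.log (b / a))) fun c hc a b ↦ ?_
  rw [mul_div_mul_left _ _ hc.ne', smul_smul, ← mul_inv, hV]
  congr 2
  ring

theorem integral_fun_norm_sub_of_finrank_eq_two (hV : finrank ℝ V = 2) (y : V) (f : ℝ → E) :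
    ∫ z, f ‖y - z‖ = (2 * Real.pi) • ∫ x in Ioi 0, x • f x := by
  have : Nontrivial V := nontrivial_of_finrank_pos (R := ℝ) (by lia)
  have hball : volume.real (Metric.ball (0 : V) 1) = Real.pi := by
    simp [Measure.real, InnerProductSpace.volume_ball_of_dim_even (k := 1) hV, Real.pi_nonneg]
  rw [integral_sub_left_eq_self (fun z ↦ f ‖z‖) volume y, integral_fun_norm_addHaar, hball, hV,
    ← Nat.cast_smul_eq_nsmul ℝ, smul_smul]
  simp

theorem busemannIntegral_of_base_eq_of_lt (hV : finrank ℝ V = 2) {X Y : UpperHalfSpace V}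
    (hbase : X.base = Y.base) (hlt : X.invHeight < Y.invHeight) (φ : ℝ → E) :
    X.busemannIntegral Y φ = (Real.pi / (2 * Real.sinh (Real.log (Y.invHeight / X.invHeight)))) •
      ∫ u in -Real.log (Y.invHeight / X.invHeight)..Real.log (Y.invHeight / X.invHeight), φ u := by
  have hradial := integral_fun_norm_sub_of_finrank_eq_two hV Y.base fun x ↦
    ((X.invHeight * x ^ 2 + X.invHeight⁻¹) * (Y.invHeight * x ^ 2 + Y.invHeight⁻¹))⁻¹ •
      φ (radialLog X.invHeight Y.invHeight x)
  rw [integral_radialLog X.invHeight_pos hlt, smul_smul] at hradial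
  simp only [busemannIntegral, invPoisson, hbase]
  refine hradial.trans ?_
  congr 1
  field_simp
  norm_num

theorem busemannIntegral_of_base_eq (hV : finrank ℝ V = 2) {X Y : UpperHalfSpace V}
    (hbase : X.base = Y.base) {r : ℝ} (hr : 0 < r) (hXY : X.coshDist Y = Real.cosh r)
    (φ : ℝ → E) :
    X.busemannIntegral Y φ = (Real.pi / (2 * Real.sinh r)) • ∫ u in -r..r, φ u := by
  have key {X Y : UpperHalfSpace V} (hbase : X.base = Y.base) (hlt : X.invHeight < Y.invHeight)
      (hXY : X.coshDist Y = Real.cosh r) (φ : ℝ → E) :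
      X.busemannIntegral Y φ = (Real.pi / (2 * Real.sinh r)) • ∫ u in -r..r, φ u := by
    have hlog : Real.log (Y.invHeight / X.invHeight) = r :=
      Real.cosh_strictMonoOn.injOn (Real.log_pos ((one_lt_div X.invHeight_pos).mpr hlt)).le hr.le
        ((coshDist_of_base_eq hbase).symm.trans hXY)
    rw [busemannIntegral_of_base_eq_of_lt hV hbase hlt, hlog]
  rcases lt_trichotomy X.invHeight Y.invHeight with hlt | heq | hgt
  · exact key hbase hlt hXY φ
  · rw [coshDist_of_base_eq hbase, heq, div_self Y.invHeight_pos.ne', Real.log_one,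
      Real.cosh_zero] at hXY
    exact absurd hXY (Real.one_lt_cosh.mpr hr.ne').ne
  · rw [busemannIntegral_comm, key hbase.symm hgt (coshDist_comm X Y ▸ hXY),
      intervalIntegral.integral_comp_neg, neg_neg]

theorem busemannIntegral_eq (hV : finrank ℝ V = 2) {X Y : UpperHalfSpace V} {r : ℝ} (hr : 0 < r)
    (hXY : X.coshDist Y = Real.cosh r) (φ : ℝ → E) :
    X.busemannIntegral Y φ = (Real.pi / (2 * Real.sinh r)) • ∫ u in -r..r, φ u := by
  by_cases hbase : X.base = Y.base
  · exact busemannIntegral_of_base_eq hV hbase hr hXY φ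
  · obtain ⟨p, hp⟩ := exists_base_invert_eq hbase
    rw [← busemannIntegral_invert hV p,
      busemannIntegral_of_base_eq hV hp hr (by rw [coshDist_invert, hXY])]

end HatBox

end UpperHalfSpace

theorem ofReal_cpow_mul_ofReal_cpow {a b : ℝ} (ha : 0 < a) (hb : 0 < b) (ρ : ℂ) :
    (a : ℂ) ^ (-(1 + ρ * I)) * (b : ℂ) ^ (-(1 - ρ * I)) =
      (a * b)⁻¹ • exp (ρ * I * Real.log (b / a)) := by
  have hinv : (((a * b)⁻¹ : ℝ) : ℂ) = exp (-Real.log a - Real.log b) := by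
    rw [← Real.exp_log (inv_pos.mpr (mul_pos ha hb)), Real.log_inv, Real.log_mul ha.ne' hb.ne']
    push_cast
    ring_nf
  rw [real_smul, hinv, cpow_def_of_ne_zero (ofReal_ne_zero.mpr ha.ne'),
    cpow_def_of_ne_zero (ofReal_ne_zero.mpr hb.ne'), ← ofReal_log ha.le, ← ofReal_log hb.le,
    Real.log_div hb.ne' ha.ne', ← exp_add, ← exp_add]
  congr 1
  push_cast
  ring

theorem integral_exp_mul_I_mul_eq_sin_div {ρ : ℂ} (hρ : ρ ≠ 0) (r : ℝ) :
    ∫ u in -r..r, exp (ρ * I * u) = 2 * sin (ρ * r) / ρ := by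
  rw [integral_exp_mul_complex (mul_ne_zero hρ I_ne_zero), sin]
  field_simp
  rw [I_sq]
  push_cast
  ring_nf

theorem bulk_to_boundary_convolution_general {V : Type*} [NormedAddCommGroup V]
    [InnerProductSpace ℝ V] [FiniteDimensional ℝ V] [MeasurableSpace V] [BorelSpace V]
    (hV : Module.finrank ℝ V = 2) {X Y : UpperHalfSpace V} {r : ℝ} (hr : 0 < r)
    (hXY : X.coshDist Y = Real.cosh r) {ρ : ℂ} (hρ : ρ ≠ 0) :
    2 * ∫ z, ((X.invPoisson z : ℂ) ^ (-(1 + ρ * I)) * (Y.invPoisson z : ℂ) ^ (-(1 - ρ * I))) /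
        (Real.pi : ℂ) =
      2 * sin (ρ * r) / (ρ * sinh r) := by
  have hπ : (Real.pi : ℂ) ≠ 0 := ofReal_ne_zero.mpr Real.pi_ne_zero
  have hbusemann : ∫ z, (X.invPoisson z : ℂ) ^ (-(1 + ρ * I)) *
      (Y.invPoisson z : ℂ) ^ (-(1 - ρ * I)) = X.busemannIntegral Y fun u ↦ exp (ρ * I * u) := by
    simp only [UpperHalfSpace.busemannIntegral,
      ofReal_cpow_mul_ofReal_cpow (X.invPoisson_pos _) (Y.invPoisson_pos _)]
  rw [integral_div, hbusemann, UpperHalfSpace.busemannIntegral_eq hV hr hXY,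
    integral_exp_mul_I_mul_eq_sin_div hρ, real_smul]
  push_cast
  field_simp

/-- Convolution of bulk-to-boundary propagators on hyperbolic 3-space (upper
half-space model): for distinct points `X₁ = (t₁,y₁)`, `X₂ = (t₂,y₂)` at hyperbolic
distance `r > 0` and `ρ ≠ 0`,
`2 ∫_ℂ (t₁|y₁−z|²+t₁⁻¹)^{−(1+iρ)} (t₂|y₂−z|²+t₂⁻¹)^{−(1−iρ)} d²z/π = 2 sin(ρr)/(ρ sinh r)`. -/
theorem bulk_to_boundary_convolution (t₁ t₂ : ℝ) (ht₁ : 0 < t₁) (ht₂ : 0 < t₂)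
    (y₁ y₂ : ℂ) (hne : (t₁, y₁) ≠ (t₂, y₂)) (r : ℝ) (hr : 0 < r)
    (hcosh : Real.cosh r = (1 / 2) * (t₁ / t₂ + t₂ / t₁ + t₁ * t₂ * ‖y₁ - y₂‖ ^ 2))
    (ρ : ℝ) (hρ : ρ ≠ 0) :
    2 * ∫ z : ℂ,
        ((t₁ * ‖y₁ - z‖ ^ 2 + t₁⁻¹ : ℂ) ^ (-(1 + ρ * Complex.I)) *
          (t₂ * ‖y₂ - z‖ ^ 2 + t₂⁻¹ : ℂ) ^ (-(1 - ρ * Complex.I))) / (Real.pi : ℂ)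
      = ((2 * Real.sin (ρ * r) / (ρ * Real.sinh r) : ℝ) : ℂ) := by
  simpa [UpperHalfSpace.invPoisson] using bulk_to_boundary_convolution_general
    (X := ⟨t₁, y₁, ht₁⟩) (Y := ⟨t₂, y₂, ht₂⟩) finrank_real_complex hr hcosh.symm
    (ofReal_ne_zero.mpr hρ)
end
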